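/- Let n ≥ 3 be odd and let L be a representable distributive quasi relation algebra. Then the nested sum S_n[L] of the finite odd Sugihara chain S_n and L is a representable distributive quasi relation algebra; moreover, if L is finitely representable, then S_n[L] is finitely representable. -/

import Mathlib

universe u v

/-- Composition of binary relations. -/
def rcomp {X : Type*} (R S : Set (X × X)) : Set (X × X) :=
  {p | ∃ z, (p.1, z) ∈ R ∧ (z, p.2) ∈ S}

/-- Converse of a binary relation. -/
def rconv {X : Type*} (R : Set (X × X)) : Set (X × X) := {p | (p.2, p.1) ∈ R}

/-- The graph of a function, as a binary relation. -/
def graphRel {X : Type*} (f : X → X) : Set (X × X) := {p | p.2 = f p.1}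

/-- The order relation `≤` as a set of pairs; this is the identity element `1`. -/
def oneRel {X : Type*} (le : X → X → Prop) : Set (X × X) := {p | le p.1 p.2}

/-- Up-sets of `(E, ≼)` where `(u,v) ≼ (x,y)` iff `x ≤ u` and `v ≤ y`. -/
def upSets {X : Type*} (le : X → X → Prop) (E : Set (X × X)) : Set (Set (X × X)) :=
  {R | R ⊆ E ∧ ∀ p ∈ R, ∀ q ∈ E, le q.1 p.1 → le p.2 q.2 → q ∈ R}

/-- `∼R = R^{c⌣} ; α`, complement taken within `E`. -/
def snegRel {X : Type*} (E : Set (X × X)) (a : X → X) (R : Set (X × X)) : Set (X × X) :=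
  rcomp (rconv (E \ R)) (graphRel a)

/-- `−R = α ; R^{c⌣}`, complement taken within `E`. -/
def rnegRel {X : Type*} (E : Set (X × X)) (a : X → X) (R : Set (X × X)) : Set (X × X) :=
  rcomp (graphRel a) (rconv (E \ R))

/-- `¬R = α ; β ; R^c ; β`, complement taken within `E`. -/
def qnegRel {X : Type*} (E : Set (X × X)) (a b : X → X) (R : Set (X × X)) : Set (X × X) :=
  rcomp (graphRel a) (rcomp (graphRel b) (rcomp (E \ R) (graphRel b)))

/-- The constant `0 = α ; (≤^c)⌣`, complement taken within `E`. -/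
def zeroRel {X : Type*} (le : X → X → Prop) (E : Set (X × X)) (a : X → X) : Set (X × X) :=
  rcomp (graphRel a) (rconv (E \ oneRel le))

/-- The data needed to build the algebra `Dq(E)`: a poset `(X, le)`, an
equivalence relation `E ⊇ le`, an order automorphism `a` and a self-inverse
dual order automorphism `b` of the poset whose graphs are contained in `E`
and which satisfy `β = α ; β ; α`. -/
structure RepBase {X : Type} (le : X → X → Prop) (E : Set (X × X)) (a b : X → X) : Prop where
  le_refl : ∀ u, le u u
  le_antisymm : ∀ u v, le u v → le v u → u = v
  le_trans : ∀ u v w, le u v → le v w → le u w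
  equiv : Equivalence fun u v => (u, v) ∈ E
  le_sub : ∀ u v, le u v → (u, v) ∈ E
  a_bij : Function.Bijective a
  a_ord : ∀ u v, le u v ↔ le (a u) (a v)
  b_invol : ∀ u, b (b u) = u
  b_dual : ∀ u v, le u v ↔ le (b v) (b u)
  a_sub : ∀ u, (u, a u) ∈ E
  b_sub : ∀ u, (u, b u) ∈ E
  aba : ∀ u, a (b (a u)) = b u

/-- The map `f` exhibits the subset `S` of `A` (closed under the given qRA
operations) as a subalgebra of the algebra `Dq(E)` of up-sets of `(E, ≼)`
over the poset `(X, le)` with order automorphism `a` and self-inverse dual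
order automorphism `b`; i.e. `f` is an injective qRA homomorphism into
`Dq(E)`. -/
structure IsQRAEmbedding (A : Type u) (S : Set A)
    (inf' sup' mul' : A → A → A) (sneg' rneg' qneg' : A → A) (one' zero' : A)
    {X : Type} (le : X → X → Prop) (E : Set (X × X)) (a b : X → X)
    (f : A → Set (X × X)) : Prop where
  base : RepBase le E a b
  closed_inf : ∀ m ∈ S, ∀ m' ∈ S, inf' m m' ∈ S
  closed_sup : ∀ m ∈ S, ∀ m' ∈ S, sup' m m' ∈ S
  closed_mul : ∀ m ∈ S, ∀ m' ∈ S, mul' m m' ∈ S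
  closed_sneg : ∀ m ∈ S, sneg' m ∈ S
  closed_rneg : ∀ m ∈ S, rneg' m ∈ S
  closed_qneg : ∀ m ∈ S, qneg' m ∈ S
  one_mem : one' ∈ S
  zero_mem : zero' ∈ S
  maps_up : ∀ m ∈ S, f m ∈ upSets le E
  inj : Set.InjOn f S
  map_inf : ∀ m ∈ S, ∀ m' ∈ S, f (inf' m m') = f m ∩ f m'
  map_sup : ∀ m ∈ S, ∀ m' ∈ S, f (sup' m m') = f m ∪ f m'
  map_mul : ∀ m ∈ S, ∀ m' ∈ S, f (mul' m m') = rcomp (f m) (f m')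
  map_sneg : ∀ m ∈ S, f (sneg' m) = snegRel E a (f m)
  map_rneg : ∀ m ∈ S, f (rneg' m) = rnegRel E a (f m)
  map_qneg : ∀ m ∈ S, f (qneg' m) = qnegRel E a b (f m)
  map_one : f one' = oneRel le
  map_zero : f zero' = zeroRel le E a

/-- The algebra carried by the subset `S` of `A` (with the given qRA
operations) is representable: it embeds as a qRA into some `Dq(E)`. -/
def RepresentableOn (A : Type u) (S : Set A)
    (inf' sup' mul' : A → A → A) (sneg' rneg' qneg' : A → A) (one' zero' : A) : Prop :=
  ∃ (X : Type) (le : X → X → Prop) (E : Set (X × X)) (a b : X → X) (f : A → Set (X × X)),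
    IsQRAEmbedding A S inf' sup' mul' sneg' rneg' qneg' one' zero' le E a b f

/-- Finitely representable: representable over a finite poset. -/
def FinRepresentableOn (A : Type u) (S : Set A)
    (inf' sup' mul' : A → A → A) (sneg' rneg' qneg' : A → A) (one' zero' : A) : Prop :=
  ∃ (X : Type) (le : X → X → Prop) (E : Set (X × X)) (a b : X → X) (f : A → Set (X × X)),
    Finite X ∧ IsQRAEmbedding A S inf' sup' mul' sneg' rneg' qneg' one' zero' le E a b f

/-- A quasi relation algebra `⟨A, ∧, ∨, ·, ∼, −, ¬, 1, 0⟩`: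
a lattice, a monoid with `a·b ≤ c ↔ a ≤ −(b·∼c) ↔ b ≤ ∼(−c·a)`,
`0 = ∼1 = −1`, (In): `∼(−a) = a = −(∼a)`, an involution `¬` satisfying
(Dm), (Di) and (Dp) (where `a + b := ∼(−a · −b)`). -/
class QRA (α : Type u) where
  le : α → α → Prop
  inf : α → α → α
  sup : α → α → α
  mul : α → α → α
  sneg : α → α
  rneg : α → α
  qneg : α → α
  one : α
  zero : α
  le_refl : ∀ x, le x x
  le_antisymm : ∀ x y, le x y → le y x → x = y
  le_trans : ∀ x y z, le x y → le y z → le x z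
  inf_le_left : ∀ x y, le (inf x y) x
  inf_le_right : ∀ x y, le (inf x y) y
  le_inf : ∀ x y z, le x y → le x z → le x (inf y z)
  le_sup_left : ∀ x y, le x (sup x y)
  le_sup_right : ∀ x y, le y (sup x y)
  sup_le : ∀ x y z, le x z → le y z → le (sup x y) z
  mul_assoc : ∀ x y z, mul (mul x y) z = mul x (mul y z)
  one_mul : ∀ x, mul one x = x
  mul_one : ∀ x, mul x one = x
  mul_le_left : ∀ x y z, le (mul x y) z ↔ le x (rneg (mul y (sneg z)))
  mul_le_right : ∀ x y z, le (mul x y) z ↔ le y (sneg (mul (rneg z) x))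
  zero_sneg_one : zero = sneg one
  zero_rneg_one : zero = rneg one
  sneg_rneg : ∀ x, sneg (rneg x) = x
  rneg_sneg : ∀ x, rneg (sneg x) = x
  qneg_qneg : ∀ x, qneg (qneg x) = x
  dm : ∀ x y, qneg (sup x y) = inf (qneg x) (qneg y)
  di : ∀ x, qneg (sneg x) = rneg (qneg x)
  dp : ∀ x y, qneg (mul x y) = sneg (mul (rneg (qneg x)) (rneg (qneg y)))

/-- The index set of the finite Sugihara chain `Sₙ` (as a subset of `ℤ`):
for `n = 2k` the indices `-k,…,-1,1,…,k`, and for `n = 2k+1` the indices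
`-k,…,-1,0,1,…,k`. -/
def sugSet (n : ℕ) : Set ℤ := {i : ℤ | 2 * |i| ≤ (n : ℤ) ∧ (Even n → i ≠ 0)}

/-- The index of the monoid identity of `Sₙ`: `a₁` if `n` is even, `a₀` if odd. -/
def sugOneIdx (n : ℕ) : ℤ := if Even n then 1 else 0

/-- Multiplication of the Sugihara chain on indices:
`aᵢ · aⱼ = aᵢ` if `|j| < |i|`, `aⱼ` if `|i| < |j|`, and `a_{min(i,j)}` if `|i| = |j|`. -/
def sugMulIdx (i j : ℤ) : ℤ := if |j| < |i| then i else if |i| < |j| then j else min i j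

variable {L : Type u} [QRA L]

/-- Meet on the nested sum `Sₙ[L]` (ambient carrier `ℤ ⊕ L`; the `K = Sₙ` part
is encoded by Sugihara indices, whose identity has index `0`). -/
def sklInf : ℤ ⊕ L → ℤ ⊕ L → ℤ ⊕ L
  | Sum.inl j, Sum.inl j' => Sum.inl (min j j')
  | Sum.inl j, Sum.inr l => if 0 ≤ j then Sum.inr l else Sum.inl (min j 0)
  | Sum.inr l, Sum.inl j => if 0 ≤ j then Sum.inr l else Sum.inl (min j 0)
  | Sum.inr l, Sum.inr l' => Sum.inr (QRA.inf l l')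

/-- Join on the nested sum `Sₙ[L]`. -/
def sklSup : ℤ ⊕ L → ℤ ⊕ L → ℤ ⊕ L
  | Sum.inl j, Sum.inl j' => Sum.inl (max j j')
  | Sum.inl j, Sum.inr l => if j ≤ 0 then Sum.inr l else Sum.inl (max j 0)
  | Sum.inr l, Sum.inl j => if j ≤ 0 then Sum.inr l else Sum.inl (max j 0)
  | Sum.inr l, Sum.inr l' => Sum.inr (QRA.sup l l')

/-- Multiplication on the nested sum `Sₙ[L]`: across parts the `L`-argument is
replaced by the identity `a₀` (index `0`) of `Sₙ`. -/
def sklMul : ℤ ⊕ L → ℤ ⊕ L → ℤ ⊕ L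
  | Sum.inl j, Sum.inl j' => Sum.inl (sugMulIdx j j')
  | Sum.inl j, Sum.inr _ => Sum.inl (sugMulIdx j 0)
  | Sum.inr _, Sum.inl j' => Sum.inl (sugMulIdx 0 j')
  | Sum.inr l, Sum.inr l' => Sum.inr (QRA.mul l l')

/-- `∼` on the nested sum `Sₙ[L]`, acting componentwise (`∼aⱼ = a₋ⱼ` on `Sₙ`). -/
def sklSneg : ℤ ⊕ L → ℤ ⊕ L
  | Sum.inl j => Sum.inl (-j)
  | Sum.inr l => Sum.inr (QRA.sneg l)

/-- `−` on the nested sum `Sₙ[L]`, acting componentwise. -/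
def sklRneg : ℤ ⊕ L → ℤ ⊕ L
  | Sum.inl j => Sum.inl (-j)
  | Sum.inr l => Sum.inr (QRA.rneg l)

/-- `¬` on the nested sum `Sₙ[L]`, acting componentwise. -/
def sklQneg : ℤ ⊕ L → ℤ ⊕ L
  | Sum.inl j => Sum.inl (-j)
  | Sum.inr l => Sum.inr (QRA.qneg l)

/-- The identity of the nested sum: `1_{Sₙ[L]} = 1_L`. -/
def sklOne : ℤ ⊕ L := Sum.inr QRA.one

/-- The negation constant of the nested sum: `0_{Sₙ[L]} = 0_L`. -/
def sklZero : ℤ ⊕ L := Sum.inr QRA.zero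

/-- The carrier of the nested sum `Sₙ[L]` inside `ℤ ⊕ L`:
`(Sₙ ∖ {a₀}) ∪ L`. -/
def sklCar (n : ℕ) : Set (ℤ ⊕ L) :=
  {x | match x with
       | Sum.inl j => j ∈ sugSet n ∧ j ≠ 0
       | Sum.inr _ => True}

/-!
Adding a new top and a new bottom to `Sₙ[L]` gives `Sₙ₊₂[L]`, so it is enough to adjoin such a pair
to an algebra embedded in some `Dq(E)`. Put a two-element antichain above each class of `E` and
another one below it; let `α` swap the two points of each new antichain and let `β` exchange the
upper antichain of a class with the lower one. Extend a relation `R ⊆ E` by the new order outside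
`X`. Composition, meet and join respect this extension; so do the negations, because outside `X`
and within a class `v ≰ α u` holds exactly when `u ≤ v`. Hence `Dq(E)` embeds in `Dq(E')`, where
`E'` is the extended equivalence relation. No extended relation is `E'` itself, the new antichains
having two points, nor `∅`, so `E'` and `∅` can represent the new top and bottom.
-/

section Relations

variable {X Q : Type*} {c : X → Q} {R S E : Set (X × X)} {a : X → X} {u v : X}

theorem mem_oneRel {le : X → X → Prop} : (u, v) ∈ oneRel le ↔ le u v := Iff.rfl

theorem mem_rcomp : (u, v) ∈ rcomp R S ↔ ∃ z, (u, z) ∈ R ∧ (z, v) ∈ S := Iff.rfl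

theorem rcomp_empty : rcomp R ∅ = ∅ :=
  Set.eq_empty_of_forall_notMem fun _ ⟨_, _, h⟩ => h

theorem empty_rcomp : rcomp ∅ R = ∅ :=
  Set.eq_empty_of_forall_notMem fun _ ⟨_, h, _⟩ => h

theorem mem_rnegRel : (u, v) ∈ rnegRel E a R ↔ (v, a u) ∈ E \ R :=
  ⟨fun ⟨_, hz, h⟩ => hz ▸ h, fun h => ⟨a u, rfl, h⟩⟩

theorem mem_snegRel (ha : Function.Injective a) :
    (u, a v) ∈ snegRel E a R ↔ (v, u) ∈ E \ R :=
  ⟨fun ⟨_, h, hz⟩ => ha hz ▸ h, fun h => ⟨v, h, rfl⟩⟩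

theorem mem_qnegRel {b : X → X} (hb : Function.Involutive b) :
    (u, v) ∈ qnegRel E a b R ↔ (b (a u), b v) ∈ E \ R := by
  constructor
  · rintro ⟨z, hz, w, hw, t, h, ht⟩
    obtain rfl : z = a u := hz
    obtain rfl : w = b (a u) := hw
    obtain rfl : v = b t := ht
    rwa [hb]
  · exact fun h => ⟨a u, rfl, b (a u), rfl, b v, h, (hb v).symm⟩

/-- The equivalence relation `E` whose classes are the fibres of `c`. Every equivalence relation has
this form, and writing it so makes the class of a point available as data. -/
def kerRel (c : X → Q) : Set (X × X) := {p | c p.1 = c p.2}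

theorem mem_kerRel : (u, v) ∈ kerRel c ↔ c u = c v := Iff.rfl

theorem rcomp_subset_kerRel (hR : R ⊆ kerRel c) (hS : S ⊆ kerRel c) : rcomp R S ⊆ kerRel c :=
  fun _ ⟨_, h, h'⟩ => (mem_kerRel.1 (hR h)).trans (hS h')

theorem rcomp_kerRel (hR : R ⊆ kerRel c) (htotal : ∀ x, ∃ y, (x, y) ∈ R) :
    rcomp R (kerRel c) = kerRel c := by
  refine (rcomp_subset_kerRel hR subset_rfl).antisymm ?_
  rintro ⟨x, z⟩ hxz
  obtain ⟨y, hxy⟩ := htotal x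
  exact ⟨y, hxy, (mem_kerRel.1 (hR hxy)).symm.trans hxz⟩

theorem kerRel_rcomp (hR : R ⊆ kerRel c) (htotal : ∀ y, ∃ x, (x, y) ∈ R) :
    rcomp (kerRel c) R = kerRel c := by
  refine (rcomp_subset_kerRel subset_rfl hR).antisymm ?_
  rintro ⟨x, z⟩ hxz
  obtain ⟨y, hyz⟩ := htotal z
  exact ⟨y, Eq.trans hxz (hR hyz).symm, hyz⟩

/-- The conjugate `β ; R⌣ ; β` of `R` by an involution `β`; it reduces `¬` to `−`. -/
def dualRel (b : X → X) (R : Set (X × X)) : Set (X × X) := (fun p => (b p.2, b p.1)) ⁻¹' R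

theorem mem_dualRel {b : X → X} : (u, v) ∈ dualRel b R ↔ (b v, b u) ∈ R := Iff.rfl

theorem snegRel_self : snegRel E a E = ∅ :=
  Set.eq_empty_of_forall_notMem fun _ ⟨_, h, _⟩ => h.2 h.1

theorem rnegRel_self : rnegRel E a E = ∅ :=
  Set.eq_empty_of_forall_notMem fun _ ⟨_, _, h⟩ => h.2 h.1

end Relations

namespace RepBase

variable {X : Type} {Q : Type*} {c : X → Q} {le : X → X → Prop} {a b : X → X}

theorem class_a (h : RepBase le (kerRel c) a b) (u : X) : c (a u) = c u := (h.a_sub u).symm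

theorem class_b (h : RepBase le (kerRel c) a b) (u : X) : c (b u) = c u := (h.b_sub u).symm

theorem oneRel_subset (h : RepBase le (kerRel c) a b) : oneRel le ⊆ kerRel c :=
  fun _ => h.le_sub _ _

theorem rcomp_oneRel_oneRel_subset {E : Set (X × X)} (h : RepBase le E a b) :
    rcomp (oneRel le) (oneRel le) ⊆ oneRel le :=
  fun _ ⟨_, huv, hvw⟩ => h.le_trans _ _ _ huv hvw

theorem mem_upSets_iff (h : RepBase le (kerRel c) a b) {R : Set (X × X)} :
    R ∈ upSets le (kerRel c) ↔
      R ⊆ kerRel c ∧ rcomp (oneRel le) (rcomp R (oneRel le)) ⊆ R := by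
  refine and_congr_right fun hR => ⟨?_, ?_⟩
  · rintro hup ⟨x, y⟩ ⟨u, hxu, v, huv, hvy⟩
    have hxy : c x = c y := (h.le_sub _ _ hxu).trans ((hR huv).trans (h.le_sub _ _ hvy))
    exact hup (u, v) huv (x, y) hxy hxu hvy
  · exact fun hup p hp q _ h₁ h₂ => hup ⟨p.1, h₁, p.2, hp, h₂⟩

theorem qnegRel_eq_rnegRel_dualRel (h : RepBase le (kerRel c) a b) (R : Set (X × X)) :
    qnegRel (kerRel c) a b R = rnegRel (kerRel c) a (dualRel b R) := by
  ext ⟨u, v⟩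
  rw [mem_qnegRel h.b_invol, mem_rnegRel]
  simp only [Set.mem_sdiff, mem_kerRel, mem_dualRel, h.class_b, eq_comm (a := c v)]

theorem dualRel_kerRel (h : RepBase le (kerRel c) a b) : dualRel b (kerRel c) = kerRel c := by
  ext ⟨u, v⟩
  simp only [mem_dualRel, mem_kerRel, h.class_b, eq_comm (a := c v)]

theorem snegRel_empty (h : RepBase le (kerRel c) a b) : snegRel (kerRel c) a ∅ = kerRel c := by
  ext ⟨u, v⟩
  obtain ⟨v, rfl⟩ := h.a_bij.surjective v
  rw [mem_snegRel h.a_bij.injective, Set.sdiff_empty, mem_kerRel, mem_kerRel, h.class_a, eq_comm]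

theorem rnegRel_empty (h : RepBase le (kerRel c) a b) : rnegRel (kerRel c) a ∅ = kerRel c := by
  ext ⟨u, v⟩
  rw [mem_rnegRel, Set.sdiff_empty, mem_kerRel, mem_kerRel, h.class_a, eq_comm]

theorem qnegRel_self (h : RepBase le (kerRel c) a b) : qnegRel (kerRel c) a b (kerRel c) = ∅ := by
  rw [h.qnegRel_eq_rnegRel_dualRel, h.dualRel_kerRel, rnegRel_self]

theorem qnegRel_empty (h : RepBase le (kerRel c) a b) : qnegRel (kerRel c) a b ∅ = kerRel c := by
  rw [h.qnegRel_eq_rnegRel_dualRel, dualRel, Set.preimage_empty, h.rnegRel_empty]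

end RepBase

section Sandwich

variable {X Q : Type}

/-- The points of `X` together with, for each class `q` of `X`, a two-element antichain above the
class and another one below it: the new point `(q, s, i)` lies above the class when `s = true` and
below it when `s = false`. -/
abbrev SandwichPoint (X Q : Type) : Type := X ⊕ Q × Bool × Bool

/-- The extension to `SandwichPoint X Q` of a relation `R` on `X`. It agrees with the order of the
sandwich except between two points of `X`, where it is `R`. -/
def sandwichRel (c : X → Q) (R : Set (X × X)) : Set (SandwichPoint X Q × SandwichPoint X Q) :=
  {p | match p with
       | (Sum.inl x, Sum.inl y) => (x, y) ∈ R
       | (Sum.inl x, Sum.inr (q, s, _)) => c x = q ∧ s = true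
       | (Sum.inr (q, s, _), Sum.inl y) => c y = q ∧ s = false
       | (Sum.inr p, Sum.inr p') => p = p' ∨ p.1 = p'.1 ∧ p.2.1 = false ∧ p'.2.1 = true}

/-- The order of the sandwich: class by class, the ordinal sum of an antichain, the class, and
another antichain. -/
def sandwichLe (c : X → Q) (le : X → X → Prop) (u v : SandwichPoint X Q) : Prop :=
  (u, v) ∈ sandwichRel c (oneRel le)

/-- The class of a point of the sandwich. -/
def sandwichClass (c : X → Q) : SandwichPoint X Q → Q
  | Sum.inl x => c x
  | Sum.inr (q, _, _) => q

/-- The order automorphism of the sandwich: it swaps the two points of each antichain. -/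
def sandwichAut (a : X → X) : SandwichPoint X Q → SandwichPoint X Q
  | Sum.inl x => Sum.inl (a x)
  | Sum.inr (q, s, i) => Sum.inr (q, s, !i)

/-- The dual order automorphism of the sandwich: it exchanges the two antichains of each class. -/
def sandwichDual (b : X → X) : SandwichPoint X Q → SandwichPoint X Q
  | Sum.inl x => Sum.inl (b x)
  | Sum.inr (q, s, i) => Sum.inr (q, !s, i)

variable {c : X → Q} {R S : Set (X × X)} {le : X → X → Prop} {a b : X → X}
  {x y : X} {q q' : Q} {s i s' i' : Bool}

@[simp, grind =]
theorem inl_inl_mem_sandwichRel : (Sum.inl x, Sum.inl y) ∈ sandwichRel c R ↔ (x, y) ∈ R := Iff.rfl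

@[simp, grind =]
theorem inl_inr_mem_sandwichRel :
    (Sum.inl x, Sum.inr (q, s, i)) ∈ sandwichRel c R ↔ c x = q ∧ s = true := Iff.rfl

@[simp, grind =]
theorem inr_inl_mem_sandwichRel :
    (Sum.inr (q, s, i), Sum.inl y) ∈ sandwichRel c R ↔ c y = q ∧ s = false := Iff.rfl

@[simp, grind =]
theorem inr_inr_mem_sandwichRel :
    (Sum.inr (q, s, i), Sum.inr (q', s', i')) ∈ sandwichRel c R ↔
      (q, s, i) = (q', s', i') ∨ q = q' ∧ s = false ∧ s' = true := Iff.rfl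

theorem oneRel_sandwichLe : oneRel (sandwichLe c le) = sandwichRel c (oneRel le) := rfl

theorem sandwichRel_subset_kerRel (hR : R ⊆ kerRel c) :
    sandwichRel c R ⊆ kerRel (sandwichClass c) := by
  rintro ⟨x | ⟨q, s, i⟩, y | ⟨q', s', i'⟩⟩ h
  · exact hR h
  · exact h.1
  · exact h.1.symm
  · exact h.elim (fun h => congrArg Prod.fst h) And.left

theorem sandwichRel_mono (h : R ⊆ S) : sandwichRel c R ⊆ sandwichRel c S := by
  rintro ⟨x | ⟨q, s, i⟩, y | ⟨q', s', i'⟩⟩ hp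
  exacts [h hp, hp, hp, hp]

theorem sandwichRel_injective : Function.Injective (sandwichRel c) := fun _ _ h =>
  Set.ext fun p => Set.ext_iff.1 h (Sum.inl p.1, Sum.inl p.2)

theorem sandwichRel_ne_empty [Nonempty Q] : sandwichRel c R ≠ ∅ := by
  inhabit Q
  let p : SandwichPoint X Q := Sum.inr (default, true, true)
  exact Set.Nonempty.ne_empty ⟨(p, p), Or.inl rfl⟩

theorem kerRel_sandwichClass_ne_empty [Nonempty Q] : kerRel (sandwichClass c) ≠ ∅ := by
  inhabit Q
  let p : SandwichPoint X Q := Sum.inr (default, true, true)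
  exact Set.Nonempty.ne_empty ⟨(p, p), rfl⟩

theorem sandwichRel_ne_kerRel [Nonempty Q] : sandwichRel c R ≠ kerRel (sandwichClass c) := by
  inhabit Q
  intro h
  have htwins : (Sum.inr (default, true, true), Sum.inr (default, true, false)) ∈
      sandwichRel c R := h ▸ mem_kerRel.2 rfl
  simp at htwins

theorem sandwichRel_inter : sandwichRel c (R ∩ S) = sandwichRel c R ∩ sandwichRel c S := by
  ext ⟨x | ⟨q, s, i⟩, y | ⟨q', s', i'⟩⟩ <;> simp

theorem sandwichRel_union : sandwichRel c (R ∪ S) = sandwichRel c R ∪ sandwichRel c S := by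
  ext ⟨x | ⟨q, s, i⟩, y | ⟨q', s', i'⟩⟩ <;> simp

theorem exists_mem_sandwichRel_right (u : SandwichPoint X Q) : ∃ v, (u, v) ∈ sandwichRel c R := by
  obtain x | p := u
  · exact ⟨Sum.inr (c x, true, true), rfl, rfl⟩
  · exact ⟨Sum.inr p, Or.inl rfl⟩

theorem exists_mem_sandwichRel_left (v : SandwichPoint X Q) : ∃ u, (u, v) ∈ sandwichRel c R := by
  obtain y | p := v
  · exact ⟨Sum.inr (c y, false, true), rfl, rfl⟩
  · exact ⟨Sum.inr p, Or.inl rfl⟩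

theorem sandwichRel_rcomp (hR : R ⊆ kerRel c) (hS : S ⊆ kerRel c) :
    sandwichRel c (rcomp R S) = rcomp (sandwichRel c R) (sandwichRel c S) := by
  have class_R : ∀ x y, (x, y) ∈ R → c x = c y := fun _ _ h => hR h
  have class_S : ∀ x y, (x, y) ∈ S → c x = c y := fun _ _ h => hS h
  apply Set.Subset.antisymm
  · rintro ⟨x | p, y | p'⟩ h
    · obtain ⟨z, hxz, hzy⟩ := h
      exact ⟨Sum.inl z, hxz, hzy⟩
    · exact ⟨Sum.inr p', h, Or.inl rfl⟩
    · exact ⟨Sum.inr p, Or.inl rfl, h⟩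
    · exact ⟨Sum.inr p, Or.inl rfl, h⟩
  · rintro ⟨x | ⟨q, s, i⟩, y | ⟨q', s', i'⟩⟩ ⟨z | ⟨q'', s'', i''⟩, h₁, h₂⟩ <;>
      grind [mem_rcomp]

-- This is why `∼` and `−` leave the outer part of an extended relation unchanged.
theorem inr_inr_not_notMem_sandwichRel_iff :
    (Sum.inr (q, s', i'), Sum.inr (q, s, !i)) ∉ sandwichRel c R ↔
      (Sum.inr (q, s, i), Sum.inr (q, s', i')) ∈ sandwichRel c R := by
  cases s <;> cases s' <;> cases i <;> cases i' <;> simp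

theorem sandwichRel_rnegRel (h : RepBase le (kerRel c) a b) (R : Set (X × X)) :
    sandwichRel c (rnegRel (kerRel c) a R) =
      rnegRel (kerRel (sandwichClass c)) (sandwichAut a) (sandwichRel c R) := by
  ext ⟨x | ⟨q, s, i⟩, y | ⟨q', s', i'⟩⟩ <;>
    grind [mem_rnegRel, mem_kerRel, sandwichClass, sandwichAut, h.class_a,
      inr_inr_not_notMem_sandwichRel_iff]

theorem sandwichRel_dualRel (h : RepBase le (kerRel c) a b) (R : Set (X × X)) :
    sandwichRel c (dualRel b R) = dualRel (sandwichDual b) (sandwichRel c R) := by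
  ext ⟨x | ⟨q, s, i⟩, y | ⟨q', s', i'⟩⟩ <;> grind [mem_dualRel, sandwichDual, h.class_b]

theorem sandwichAut_bijective (ha : Function.Bijective a) :
    Function.Bijective (sandwichAut (Q := Q) a) := by
  constructor
  · rintro (x | ⟨q, s, i⟩) (y | ⟨q', s', i'⟩) h <;>
      simp_all [sandwichAut, ha.injective.eq_iff]
  · rintro (y | ⟨q, s, i⟩)
    · obtain ⟨x, rfl⟩ := ha.surjective y
      exact ⟨Sum.inl x, rfl⟩
    · exact ⟨Sum.inr (q, s, !i), by simp only [sandwichAut, Bool.not_not]⟩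

theorem RepBase.sandwich (h : RepBase le (kerRel c) a b) :
    RepBase (sandwichLe c le) (kerRel (sandwichClass c)) (sandwichAut a) (sandwichDual b) where
  le_refl := by
    rintro (x | p)
    exacts [h.le_refl x, Or.inl rfl]
  le_antisymm := by
    rintro (x | ⟨q, s, i⟩) (y | ⟨q', s', i'⟩) huv hvu <;>
      grind [sandwichLe, mem_oneRel, h.le_antisymm]
  le_trans u v w huv hvw := by
    have hcomp := sandwichRel_mono (c := c) h.rcomp_oneRel_oneRel_subset
    rw [sandwichRel_rcomp h.oneRel_subset h.oneRel_subset] at hcomp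
    exact hcomp ⟨v, huv, hvw⟩
  equiv := ⟨fun _ => rfl, Eq.symm, Eq.trans⟩
  le_sub _ _ := fun huv => sandwichRel_subset_kerRel h.oneRel_subset huv
  a_bij := sandwichAut_bijective h.a_bij
  a_ord := by
    rintro (x | ⟨q, s, i⟩) (y | ⟨q', s', i'⟩) <;>
      simp [sandwichLe, mem_oneRel, sandwichAut, h.class_a, ← h.a_ord]
  b_invol := by
    rintro (x | ⟨q, s, i⟩) <;> simp only [sandwichDual, h.b_invol, Bool.not_not]
  b_dual := by
    rintro (x | ⟨q, s, i⟩) (y | ⟨q', s', i'⟩) <;>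
      grind [sandwichLe, mem_oneRel, sandwichDual, h.class_b, h.b_dual]
  a_sub := by
    rintro (x | p)
    exacts [h.a_sub x, rfl]
  b_sub := by
    rintro (x | p)
    exacts [h.b_sub x, rfl]
  aba := by
    rintro (x | ⟨q, s, i⟩) <;> simp only [sandwichAut, sandwichDual, h.aba, Bool.not_not]

theorem sandwichRel_snegRel (h : RepBase le (kerRel c) a b) (R : Set (X × X)) :
    sandwichRel c (snegRel (kerRel c) a R) =
      snegRel (kerRel (sandwichClass c)) (sandwichAut a) (sandwichRel c R) := by
  ext ⟨u, v⟩
  obtain ⟨v, rfl⟩ := h.sandwich.a_bij.surjective v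
  rw [mem_snegRel h.sandwich.a_bij.injective]
  obtain x | ⟨q, s, i⟩ := u <;> obtain y | ⟨q', s', i'⟩ := v <;>
    grind [mem_snegRel h.a_bij.injective, mem_kerRel, sandwichClass, sandwichAut, h.class_a,
      inr_inr_not_notMem_sandwichRel_iff]

theorem sandwichRel_qnegRel (h : RepBase le (kerRel c) a b) (R : Set (X × X)) :
    sandwichRel c (qnegRel (kerRel c) a b R) =
      qnegRel (kerRel (sandwichClass c)) (sandwichAut a) (sandwichDual b) (sandwichRel c R) := by
  rw [h.qnegRel_eq_rnegRel_dualRel, sandwichRel_rnegRel h, sandwichRel_dualRel h,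
    h.sandwich.qnegRel_eq_rnegRel_dualRel]

theorem sandwichRel_mem_upSets (h : RepBase le (kerRel c) a b) (hR : R ∈ upSets le (kerRel c)) :
    sandwichRel c R ∈ upSets (sandwichLe c le) (kerRel (sandwichClass c)) := by
  obtain ⟨hRc, hup⟩ := h.mem_upSets_iff.1 hR
  refine h.sandwich.mem_upSets_iff.2 ⟨sandwichRel_subset_kerRel hRc, ?_⟩
  rw [oneRel_sandwichLe, ← sandwichRel_rcomp hRc h.oneRel_subset,
    ← sandwichRel_rcomp h.oneRel_subset (rcomp_subset_kerRel hRc h.oneRel_subset)]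
  exact sandwichRel_mono hup

end Sandwich

/-- The set `T`, with the given operations, is the nested sum `S₃[S]`: a new top and a new bottom
are added to `S`, the bottom is absorbing, the top absorbs everything else, and the three negations
exchange the two. -/
structure IsSugiharaLayer {A : Type*} (T S : Set A) (inf' sup' mul' : A → A → A)
    (sneg' rneg' qneg' : A → A) (top bot : A) : Prop where
  eq_insert : T = insert top (insert bot S)
  top_ne_bot : top ≠ bot
  top_notMem : top ∉ S
  bot_notMem : bot ∉ S
  top_inf : ∀ x ∈ T, inf' top x = x
  inf_top : ∀ x ∈ T, inf' x top = x
  bot_inf : ∀ x ∈ T, inf' bot x = bot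
  inf_bot : ∀ x ∈ T, inf' x bot = bot
  top_sup : ∀ x ∈ T, sup' top x = top
  sup_top : ∀ x ∈ T, sup' x top = top
  bot_sup : ∀ x ∈ T, sup' bot x = x
  sup_bot : ∀ x ∈ T, sup' x bot = x
  bot_mul : ∀ x ∈ T, mul' bot x = bot
  mul_bot : ∀ x ∈ T, mul' x bot = bot
  top_mul : ∀ x ∈ T, x ≠ bot → mul' top x = top
  mul_top : ∀ x ∈ T, x ≠ bot → mul' x top = top
  sneg_top : sneg' top = bot
  sneg_bot : sneg' bot = top
  rneg_top : rneg' top = bot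
  rneg_bot : rneg' bot = top
  qneg_top : qneg' top = bot
  qneg_bot : qneg' bot = top

open Classical in
/-- The extension of `f` that represents a new top by the full equivalence relation of the sandwich
and a new bottom by the empty relation. -/
noncomputable def layerMap {A : Type*} {X Q : Type} (c : X → Q) (top bot : A)
    (f : A → Set (X × X)) (x : A) : Set (SandwichPoint X Q × SandwichPoint X Q) :=
  if x = top then kerRel (sandwichClass c) else if x = bot then ∅ else sandwichRel c (f x)

namespace IsSugiharaLayer

variable {A : Type u} {T S : Set A} {inf' sup' mul' : A → A → A} {sneg' rneg' qneg' : A → A}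
  {one' zero' top bot : A} {X Q : Type} {le : X → X → Prop} {c : X → Q} {a b : X → X}
  {f : A → Set (X × X)} {x y : A}

section Carrier

variable (hl : IsSugiharaLayer T S inf' sup' mul' sneg' rneg' qneg' top bot)

include hl

theorem mem_iff : x ∈ T ↔ x = top ∨ x = bot ∨ x ∈ S := by
  simp only [hl.eq_insert, Set.mem_insert_iff]

theorem top_mem : top ∈ T := hl.mem_iff.2 (Or.inl rfl)

theorem bot_mem : bot ∈ T := hl.mem_iff.2 (Or.inr (Or.inl rfl))

theorem mem_of_mem (hx : x ∈ S) : x ∈ T := hl.mem_iff.2 (Or.inr (Or.inr hx))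

theorem inf_mem (hinf : x ∈ S → y ∈ S → inf' x y ∈ S) (hx : x ∈ T) (hy : y ∈ T) :
    inf' x y ∈ T := by
  grind [hl.mem_iff, hl.top_inf y, hl.inf_top x, hl.bot_inf y, hl.inf_bot x]

theorem sup_mem (hsup : x ∈ S → y ∈ S → sup' x y ∈ S) (hx : x ∈ T) (hy : y ∈ T) :
    sup' x y ∈ T := by
  grind [hl.mem_iff, hl.top_sup y, hl.sup_top x, hl.bot_sup y, hl.sup_bot x]

theorem mul_mem (hmul : x ∈ S → y ∈ S → mul' x y ∈ S) (hx : x ∈ T) (hy : y ∈ T) :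
    mul' x y ∈ T := by
  grind [hl.mem_iff, hl.top_mul y, hl.mul_top x, hl.bot_mul y, hl.mul_bot x]

theorem neg_mem {neg' : A → A} (htop : neg' top = bot) (hbot : neg' bot = top)
    (hneg : ∀ x ∈ S, neg' x ∈ S) (hx : x ∈ T) : neg' x ∈ T := by
  obtain rfl | rfl | hx := hl.mem_iff.1 hx
  · exact htop ▸ hl.bot_mem
  · exact hbot ▸ hl.top_mem
  · exact hl.mem_of_mem (hneg x hx)

end Carrier

section LayerMap

theorem layerMap_top : layerMap c top bot f top = kerRel (sandwichClass c) := if_pos rfl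

variable (hl : IsSugiharaLayer T S inf' sup' mul' sneg' rneg' qneg' top bot)

include hl

theorem layerMap_bot : layerMap c top bot f bot = ∅ := by
  rw [layerMap, if_neg hl.top_ne_bot.symm, if_pos rfl]

theorem layerMap_of_mem (hx : x ∈ S) : layerMap c top bot f x = sandwichRel c (f x) := by
  rw [layerMap, if_neg (ne_of_mem_of_not_mem hx hl.top_notMem),
    if_neg (ne_of_mem_of_not_mem hx hl.bot_notMem)]

theorem injOn_layerMap [Nonempty Q] (hf : Set.InjOn f S) : Set.InjOn (layerMap c top bot f) T := by
  have hbot : Set.InjOn (layerMap c top bot f) (insert bot S) := by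
    rw [Set.injOn_insert hl.bot_notMem, hl.layerMap_bot]
    refine ⟨fun x hx y hy hxy => hf hx hy (sandwichRel_injective (c := c) ?_), ?_⟩
    · rwa [← hl.layerMap_of_mem hx, ← hl.layerMap_of_mem hy]
    · rintro ⟨x, hx, h_empty⟩
      rw [hl.layerMap_of_mem hx] at h_empty
      exact sandwichRel_ne_empty h_empty
  have htop : top ∉ insert bot S := by simp [hl.top_ne_bot, hl.top_notMem]
  rw [hl.eq_insert, Set.injOn_insert htop, layerMap_top]
  refine ⟨hbot, ?_⟩
  rintro ⟨x, rfl | hx, h_full⟩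
  · rw [hl.layerMap_bot] at h_full
    exact kerRel_sandwichClass_ne_empty h_full.symm
  · rw [hl.layerMap_of_mem hx] at h_full
    exact sandwichRel_ne_kerRel h_full

theorem layerMap_neg {neg' : A → A} (htop : neg' top = bot) (hbot : neg' bot = top)
    {neg : Set (X × X) → Set (X × X)}
    {negExt : Set (SandwichPoint X Q × SandwichPoint X Q) →
      Set (SandwichPoint X Q × SandwichPoint X Q)}
    (h_full : negExt (kerRel (sandwichClass c)) = ∅)
    (h_empty : negExt ∅ = kerRel (sandwichClass c))
    (h_sandwich : ∀ R, sandwichRel c (neg R) = negExt (sandwichRel c R))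
    (hneg : ∀ x ∈ S, neg' x ∈ S) (hf : ∀ x ∈ S, f (neg' x) = neg (f x)) (hx : x ∈ T) :
    layerMap c top bot f (neg' x) = negExt (layerMap c top bot f x) := by
  obtain rfl | rfl | hx := hl.mem_iff.1 hx
  · rw [htop, hl.layerMap_bot, layerMap_top, h_full]
  · rw [hbot, hl.layerMap_bot, layerMap_top, h_empty]
  · rw [hl.layerMap_of_mem (hneg x hx), hl.layerMap_of_mem hx, hf x hx, h_sandwich]

theorem exists_mem_layerMap_right (hx : x ∈ T) (hne : x ≠ bot) (u : SandwichPoint X Q) :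
    ∃ v, (u, v) ∈ layerMap c top bot f x := by
  obtain rfl | rfl | hx := hl.mem_iff.1 hx
  · exact ⟨u, layerMap_top ▸ mem_kerRel.2 rfl⟩
  · exact absurd rfl hne
  · exact hl.layerMap_of_mem hx ▸ exists_mem_sandwichRel_right u

theorem exists_mem_layerMap_left (hx : x ∈ T) (hne : x ≠ bot) (v : SandwichPoint X Q) :
    ∃ u, (u, v) ∈ layerMap c top bot f x := by
  obtain rfl | rfl | hx := hl.mem_iff.1 hx
  · exact ⟨v, layerMap_top ▸ mem_kerRel.2 rfl⟩
  · exact absurd rfl hne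
  · exact hl.layerMap_of_mem hx ▸ exists_mem_sandwichRel_left v

variable (h : IsQRAEmbedding A S inf' sup' mul' sneg' rneg' qneg' one' zero' le (kerRel c) a b f)

include h

theorem layerMap_mem_upSets (hx : x ∈ T) :
    layerMap c top bot f x ∈ upSets (sandwichLe c le) (kerRel (sandwichClass c)) := by
  obtain rfl | rfl | hx := hl.mem_iff.1 hx
  · exact layerMap_top ▸ ⟨subset_rfl, fun _ _ _ hq _ _ => hq⟩
  · exact hl.layerMap_bot ▸ ⟨Set.empty_subset _, fun _ hp => hp.elim⟩
  · exact hl.layerMap_of_mem hx ▸ sandwichRel_mem_upSets h.base (h.maps_up x hx)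

theorem layerMap_subset_kerRel (hx : x ∈ T) :
    layerMap c top bot f x ⊆ kerRel (sandwichClass c) := (hl.layerMap_mem_upSets h hx).1

theorem layerMap_inf (hx : x ∈ T) (hy : y ∈ T) :
    layerMap c top bot f (inf' x y) = layerMap c top bot f x ∩ layerMap c top bot f y := by
  obtain rfl | rfl | hxS := hl.mem_iff.1 hx
  · rw [hl.top_inf y hy, layerMap_top, Set.inter_eq_right.2 (hl.layerMap_subset_kerRel h hy)]
  · rw [hl.bot_inf y hy, hl.layerMap_bot, Set.empty_inter]
  obtain rfl | rfl | hyS := hl.mem_iff.1 hy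
  · rw [hl.inf_top x hx, layerMap_top, Set.inter_eq_left.2 (hl.layerMap_subset_kerRel h hx)]
  · rw [hl.inf_bot x hx, hl.layerMap_bot, Set.inter_empty]
  · rw [hl.layerMap_of_mem (h.closed_inf x hxS y hyS), hl.layerMap_of_mem hxS,
      hl.layerMap_of_mem hyS, h.map_inf x hxS y hyS, sandwichRel_inter]

theorem layerMap_sup (hx : x ∈ T) (hy : y ∈ T) :
    layerMap c top bot f (sup' x y) = layerMap c top bot f x ∪ layerMap c top bot f y := by
  obtain rfl | rfl | hxS := hl.mem_iff.1 hx
  · rw [hl.top_sup y hy, layerMap_top, Set.union_eq_left.2 (hl.layerMap_subset_kerRel h hy)]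
  · rw [hl.bot_sup y hy, hl.layerMap_bot, Set.empty_union]
  obtain rfl | rfl | hyS := hl.mem_iff.1 hy
  · rw [hl.sup_top x hx, layerMap_top, Set.union_eq_right.2 (hl.layerMap_subset_kerRel h hx)]
  · rw [hl.sup_bot x hx, hl.layerMap_bot, Set.union_empty]
  · rw [hl.layerMap_of_mem (h.closed_sup x hxS y hyS), hl.layerMap_of_mem hxS,
      hl.layerMap_of_mem hyS, h.map_sup x hxS y hyS, sandwichRel_union]

theorem layerMap_mul (hx : x ∈ T) (hy : y ∈ T) :
    layerMap c top bot f (mul' x y) = rcomp (layerMap c top bot f x) (layerMap c top bot f y) := by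
  obtain rfl | hxbot := eq_or_ne x bot
  · rw [hl.bot_mul y hy, hl.layerMap_bot, empty_rcomp]
  obtain rfl | hybot := eq_or_ne y bot
  · rw [hl.mul_bot x hx, hl.layerMap_bot, rcomp_empty]
  obtain rfl | rfl | hxS := hl.mem_iff.1 hx
  · rw [hl.top_mul y hy hybot, layerMap_top, kerRel_rcomp (hl.layerMap_subset_kerRel h hy)
      (hl.exists_mem_layerMap_left hy hybot)]
  · exact absurd rfl hxbot
  obtain rfl | rfl | hyS := hl.mem_iff.1 hy
  · rw [hl.mul_top x hx hxbot, layerMap_top, rcomp_kerRel (hl.layerMap_subset_kerRel h hx)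
      (hl.exists_mem_layerMap_right hx hxbot)]
  · exact absurd rfl hybot
  · rw [hl.layerMap_of_mem (h.closed_mul x hxS y hyS), hl.layerMap_of_mem hxS,
      hl.layerMap_of_mem hyS, h.map_mul x hxS y hyS,
      sandwichRel_rcomp (h.maps_up x hxS).1 (h.maps_up y hyS).1]

theorem isQRAEmbedding_layerMap [Nonempty Q] :
    IsQRAEmbedding A T inf' sup' mul' sneg' rneg' qneg' one' zero' (sandwichLe c le)
      (kerRel (sandwichClass c)) (sandwichAut a) (sandwichDual b) (layerMap c top bot f) where
  base := h.base.sandwich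
  closed_inf _ hx _ hy := hl.inf_mem (h.closed_inf _ · _) hx hy
  closed_sup _ hx _ hy := hl.sup_mem (h.closed_sup _ · _) hx hy
  closed_mul _ hx _ hy := hl.mul_mem (h.closed_mul _ · _) hx hy
  closed_sneg _ hx := hl.neg_mem hl.sneg_top hl.sneg_bot h.closed_sneg hx
  closed_rneg _ hx := hl.neg_mem hl.rneg_top hl.rneg_bot h.closed_rneg hx
  closed_qneg _ hx := hl.neg_mem hl.qneg_top hl.qneg_bot h.closed_qneg hx
  one_mem := hl.mem_of_mem h.one_mem
  zero_mem := hl.mem_of_mem h.zero_mem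
  maps_up _ hx := hl.layerMap_mem_upSets h hx
  inj := hl.injOn_layerMap h.inj
  map_inf _ hx _ hy := hl.layerMap_inf h hx hy
  map_sup _ hx _ hy := hl.layerMap_sup h hx hy
  map_mul _ hx _ hy := hl.layerMap_mul h hx hy
  map_sneg _ hx := hl.layerMap_neg hl.sneg_top hl.sneg_bot snegRel_self
    h.base.sandwich.snegRel_empty (sandwichRel_snegRel h.base) h.closed_sneg h.map_sneg hx
  map_rneg _ hx := hl.layerMap_neg hl.rneg_top hl.rneg_bot rnegRel_self
    h.base.sandwich.rnegRel_empty (sandwichRel_rnegRel h.base) h.closed_rneg h.map_rneg hx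
  map_qneg _ hx := hl.layerMap_neg hl.qneg_top hl.qneg_bot h.base.sandwich.qnegRel_self
    h.base.sandwich.qnegRel_empty (sandwichRel_qnegRel h.base) h.closed_qneg h.map_qneg hx
  map_one := by rw [hl.layerMap_of_mem h.one_mem, h.map_one, oneRel_sandwichLe]
  map_zero := (hl.layerMap_of_mem h.zero_mem).trans <|
    h.map_zero ▸ sandwichRel_rnegRel h.base (oneRel le)

end LayerMap

end IsSugiharaLayer

theorem sugMulIdx_comm (i j : ℤ) : sugMulIdx i j = sugMulIdx j i := by grind [sugMulIdx]

theorem sugMulIdx_neg_of_abs_le {i m : ℤ} (h : |i| ≤ m) : sugMulIdx (-m) i = -m := by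
  grind [sugMulIdx]

theorem sugMulIdx_of_abs_le {i m : ℤ} (h : |i| ≤ m) (hne : i ≠ -m) : sugMulIdx m i = m := by
  grind [sugMulIdx]

section SugiharaCarrier

variable {M : Type*} {j : ℤ} {k : ℕ} {x : ℤ ⊕ M}

/-- The position of an element of the nested sum relative to the Sugihara chain: the elements of the
inner algebra all take the place of the identity `a₀`. -/
def sklIdx : ℤ ⊕ M → ℤ
  | Sum.inl j => j
  | Sum.inr _ => 0

theorem sklIdx_ne (hx : x ≠ Sum.inl j) (hj : j ≠ 0) : sklIdx x ≠ j := by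
  obtain i | _ := x
  · exact fun h => hx (congrArg Sum.inl h)
  · exact hj.symm

theorem inl_mem_sklCar : Sum.inl j ∈ sklCar (L := M) (2 * k + 1) ↔ |j| ≤ k ∧ j ≠ 0 := by
  have hodd : ¬Even (2 * k + 1) := Nat.not_even_bit1 k
  simp only [sklCar, sugSet, Set.mem_ofPred_eq, hodd, false_imp_iff, and_true]
  exact and_congr_left fun _ => by push_cast; omega

theorem inr_mem_sklCar {n : ℕ} (l : M) : Sum.inr l ∈ sklCar n := trivial

theorem abs_sklIdx_le (hx : x ∈ sklCar (2 * k + 1)) : |sklIdx x| ≤ k := by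
  obtain i | _ := x
  · exact (inl_mem_sklCar.1 hx).1
  · simp [sklIdx]

theorem sklCar_one : sklCar (L := M) 1 = Set.range Sum.inr := by
  ext (j | l)
  · have h : Sum.inl j ∈ sklCar (L := M) (2 * 0 + 1) ↔ _ := inl_mem_sklCar
    simpa using h
  · simp [inr_mem_sklCar]

theorem sklCar_succ (k : ℕ) : sklCar (L := M) (2 * (k + 1) + 1) =
    insert (Sum.inl ↑(k + 1)) (insert (Sum.inl (-↑(k + 1))) (sklCar (2 * k + 1))) := by
  ext (j | l)
  · simp only [Set.mem_insert_iff, Sum.inl.injEq, inl_mem_sklCar]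
    grind
  · simp [inr_mem_sklCar]

end SugiharaCarrier

section NestedSum

variable {j : ℤ} {x : ℤ ⊕ L}

theorem sklInf_inl_comm (x : ℤ ⊕ L) (j : ℤ) : sklInf x (Sum.inl j) = sklInf (Sum.inl j) x := by
  obtain i | _ := x
  · exact congrArg Sum.inl (min_comm i j)
  · rfl

theorem sklSup_inl_comm (x : ℤ ⊕ L) (j : ℤ) : sklSup x (Sum.inl j) = sklSup (Sum.inl j) x := by
  obtain i | _ := x
  · exact congrArg Sum.inl (max_comm i j)
  · rfl

theorem sklMul_inl_comm (x : ℤ ⊕ L) (j : ℤ) : sklMul x (Sum.inl j) = sklMul (Sum.inl j) x := by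
  obtain i | _ := x
  · exact congrArg Sum.inl (sugMulIdx_comm i j)
  · exact congrArg Sum.inl (sugMulIdx_comm 0 j)

theorem inl_sklInf_of_sklIdx_le (h : sklIdx x ≤ j) : sklInf (Sum.inl j) x = x := by
  obtain i | _ := x
  · exact congrArg Sum.inl (min_eq_right h)
  · exact if_pos h

theorem inl_sklInf_of_le_sklIdx (h : j ≤ sklIdx x) (hj : j ≠ 0) :
    sklInf (Sum.inl j) x = Sum.inl j := by
  obtain i | _ := x
  · exact congrArg Sum.inl (min_eq_left h)
  · exact (if_neg (h.lt_of_ne hj).not_ge).trans (congrArg Sum.inl (min_eq_left h))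

theorem inl_sklSup_of_le_sklIdx (h : j ≤ sklIdx x) : sklSup (Sum.inl j) x = x := by
  obtain i | _ := x
  · exact congrArg Sum.inl (max_eq_right h)
  · exact if_pos h

theorem inl_sklSup_of_sklIdx_le (h : sklIdx x ≤ j) (hj : j ≠ 0) :
    sklSup (Sum.inl j) x = Sum.inl j := by
  obtain i | _ := x
  · exact congrArg Sum.inl (max_eq_left h)
  · exact (if_neg (h.lt_of_ne' hj).not_ge).trans (congrArg Sum.inl (max_eq_left h))

theorem inl_sklMul (j : ℤ) (x : ℤ ⊕ L) :
    sklMul (Sum.inl j) x = Sum.inl (sugMulIdx j (sklIdx x)) := by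
  obtain i | _ := x <;> rfl

theorem inl_neg_sklMul (h : |sklIdx x| ≤ j) : sklMul (Sum.inl (-j)) x = Sum.inl (-j) := by
  rw [inl_sklMul, sugMulIdx_neg_of_abs_le h]

theorem inl_sklMul_of_ne (h : |sklIdx x| ≤ j) (hj : j ≠ 0) (hx : x ≠ Sum.inl (-j)) :
    sklMul (Sum.inl j) x = Sum.inl j := by
  rw [inl_sklMul, sugMulIdx_of_abs_le h (sklIdx_ne hx (neg_ne_zero.2 hj))]

theorem isSugiharaLayer_sklCar (k : ℕ) :
    IsSugiharaLayer (sklCar (L := L) (2 * (k + 1) + 1)) (sklCar (2 * k + 1)) sklInf sklSup sklMul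
      sklSneg sklRneg sklQneg (Sum.inl ↑(k + 1)) (Sum.inl (-↑(k + 1))) := by
  have idx_le : ∀ x ∈ sklCar (L := L) (2 * (k + 1) + 1), |sklIdx x| ≤ ↑(k + 1) := fun x =>
    abs_sklIdx_le
  have le_top x hx := (abs_le.1 (idx_le x hx)).2
  have bot_le x hx := (abs_le.1 (idx_le x hx)).1
  have htop : ((k + 1 : ℕ) : ℤ) ≠ 0 := by omega
  have hbot : -((k + 1 : ℕ) : ℤ) ≠ 0 := by omega
  exact {
    eq_insert := sklCar_succ k
    top_ne_bot := by rw [Ne, Sum.inl.injEq]; omega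
    top_notMem := by rw [inl_mem_sklCar]; grind
    bot_notMem := by rw [inl_mem_sklCar]; grind
    top_inf := fun x hx => inl_sklInf_of_sklIdx_le (le_top x hx)
    inf_top := fun x hx => (sklInf_inl_comm x _).trans (inl_sklInf_of_sklIdx_le (le_top x hx))
    bot_inf := fun x hx => inl_sklInf_of_le_sklIdx (bot_le x hx) hbot
    inf_bot := fun x hx => (sklInf_inl_comm x _).trans (inl_sklInf_of_le_sklIdx (bot_le x hx) hbot)
    top_sup := fun x hx => inl_sklSup_of_sklIdx_le (le_top x hx) htop
    sup_top := fun x hx => (sklSup_inl_comm x _).trans (inl_sklSup_of_sklIdx_le (le_top x hx) htop)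
    bot_sup := fun x hx => inl_sklSup_of_le_sklIdx (bot_le x hx)
    sup_bot := fun x hx => (sklSup_inl_comm x _).trans (inl_sklSup_of_le_sklIdx (bot_le x hx))
    bot_mul := fun x hx => inl_neg_sklMul (idx_le x hx)
    mul_bot := fun x hx => (sklMul_inl_comm x _).trans (inl_neg_sklMul (idx_le x hx))
    top_mul := fun x hx => inl_sklMul_of_ne (idx_le x hx) htop
    mul_top := fun x hx hne => (sklMul_inl_comm x _).trans (inl_sklMul_of_ne (idx_le x hx) htop hne)
    sneg_top := rfl
    sneg_bot := congrArg Sum.inl (neg_neg _)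
    rneg_top := rfl
    rneg_bot := congrArg Sum.inl (neg_neg _)
    qneg_top := rfl
    qneg_bot := congrArg Sum.inl (neg_neg _) }

theorem isQRAEmbedding_sklCar_one {X : Type} {le : X → X → Prop} {E : Set (X × X)} {a b : X → X}
    {f : L → Set (X × X)}
    (h : IsQRAEmbedding L Set.univ QRA.inf QRA.sup QRA.mul QRA.sneg QRA.rneg QRA.qneg QRA.one
      QRA.zero le E a b f) :
    IsQRAEmbedding (ℤ ⊕ L) (sklCar 1) sklInf sklSup sklMul sklSneg sklRneg sklQneg sklOne sklZero
      le E a b (Sum.elim (fun _ => ∅) f) := by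
  rw [sklCar_one, ← Set.image_univ]
  exact {
    base := h.base
    closed_inf := by rintro _ ⟨l, -, rfl⟩ _ ⟨l', -, rfl⟩; exact ⟨_, trivial, rfl⟩
    closed_sup := by rintro _ ⟨l, -, rfl⟩ _ ⟨l', -, rfl⟩; exact ⟨_, trivial, rfl⟩
    closed_mul := by rintro _ ⟨l, -, rfl⟩ _ ⟨l', -, rfl⟩; exact ⟨_, trivial, rfl⟩
    closed_sneg := by rintro _ ⟨l, -, rfl⟩; exact ⟨_, trivial, rfl⟩
    closed_rneg := by rintro _ ⟨l, -, rfl⟩; exact ⟨_, trivial, rfl⟩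
    closed_qneg := by rintro _ ⟨l, -, rfl⟩; exact ⟨_, trivial, rfl⟩
    one_mem := ⟨_, trivial, rfl⟩
    zero_mem := ⟨_, trivial, rfl⟩
    maps_up := Set.forall_mem_image.2 h.maps_up
    inj := Set.InjOn.image_of_comp h.inj
    map_inf := Set.forall_mem_image.2 fun l hl => Set.forall_mem_image.2 (h.map_inf l hl)
    map_sup := Set.forall_mem_image.2 fun l hl => Set.forall_mem_image.2 (h.map_sup l hl)
    map_mul := Set.forall_mem_image.2 fun l hl => Set.forall_mem_image.2 (h.map_mul l hl)
    map_sneg := Set.forall_mem_image.2 h.map_sneg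
    map_rneg := Set.forall_mem_image.2 h.map_rneg
    map_qneg := Set.forall_mem_image.2 h.map_qneg
    map_one := h.map_one
    map_zero := h.map_zero }

theorem exists_eq_kerRel {X : Type} {E : Set (X × X)} (hE : Equivalence fun u v => (u, v) ∈ E) :
    ∃ (Q : Type) (c : X → Q), Nonempty Q ∧ (Finite X → Finite Q) ∧ E = kerRel c := by
  let r : Setoid X := ⟨_, hE⟩
  -- `none` is a class without points: without it, there would be no class when `X` is empty.
  refine ⟨Option (Quotient r), fun x => some (Quotient.mk r x), ⟨none⟩, fun _ => inferInstance, ?_⟩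
  ext ⟨u, v⟩
  rw [mem_kerRel, Option.some_inj, Quotient.eq]
  rfl

theorem IsQRAEmbedding.exists_nestedSum {X : Type} {le : X → X → Prop} {E : Set (X × X)}
    {a b : X → X} {f : L → Set (X × X)}
    (h : IsQRAEmbedding L Set.univ QRA.inf QRA.sup QRA.mul QRA.sneg QRA.rneg QRA.qneg QRA.one
      QRA.zero le E a b f) (k : ℕ) :
    ∃ (Y Q : Type) (leY : Y → Y → Prop) (c : Y → Q) (aY bY : Y → Y) (g : ℤ ⊕ L → Set (Y × Y)),
      Nonempty Q ∧ (Finite X → Finite Y ∧ Finite Q) ∧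
        IsQRAEmbedding (ℤ ⊕ L) (sklCar (2 * k + 1)) sklInf sklSup sklMul sklSneg sklRneg sklQneg
          sklOne sklZero leY (kerRel c) aY bY g := by
  induction k with
  | zero =>
    obtain ⟨Q, c, hQ, hfin, rfl⟩ := exists_eq_kerRel h.base.equiv
    exact ⟨X, Q, le, c, a, b, _, hQ, fun hX => ⟨hX, hfin hX⟩, isQRAEmbedding_sklCar_one h⟩
  | succ k ih =>
    obtain ⟨Y, Q, leY, c, aY, bY, g, hQ, hfin, hg⟩ := ih
    refine ⟨SandwichPoint Y Q, Q, _, _, _, _, _, hQ, fun hX => ?_,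
      (isSugiharaLayer_sklCar k).isQRAEmbedding_layerMap hg⟩
    obtain ⟨hY, hQ'⟩ := hfin hX
    exact ⟨inferInstance, hQ'⟩

theorem RepresentableOn.nestedSum
    (h : RepresentableOn L Set.univ QRA.inf QRA.sup QRA.mul QRA.sneg QRA.rneg QRA.qneg QRA.one
      QRA.zero) (k : ℕ) :
    RepresentableOn (ℤ ⊕ L) (sklCar (2 * k + 1)) sklInf sklSup sklMul sklSneg sklRneg sklQneg
      sklOne sklZero := by
  obtain ⟨X, le, E, a, b, f, hf⟩ := h
  obtain ⟨Y, Q, leY, c, aY, bY, g, -, -, hg⟩ := hf.exists_nestedSum k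
  exact ⟨Y, leY, kerRel c, aY, bY, g, hg⟩

theorem FinRepresentableOn.nestedSum
    (h : FinRepresentableOn L Set.univ QRA.inf QRA.sup QRA.mul QRA.sneg QRA.rneg QRA.qneg QRA.one
      QRA.zero) (k : ℕ) :
    FinRepresentableOn (ℤ ⊕ L) (sklCar (2 * k + 1)) sklInf sklSup sklMul sklSneg sklRneg sklQneg
      sklOne sklZero := by
  obtain ⟨X, le, E, a, b, f, hX, hf⟩ := h
  obtain ⟨Y, Q, leY, c, aY, bY, g, -, hfin, hg⟩ := hf.exists_nestedSum k
  exact ⟨Y, leY, kerRel c, aY, bY, g, (hfin hX).1, hg⟩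

end NestedSum

theorem RepresentableOn.inf_sup_distrib {A : Type u} {S : Set A} {inf' sup' mul' : A → A → A}
    {sneg' rneg' qneg' : A → A} {one' zero' : A}
    (h : RepresentableOn A S inf' sup' mul' sneg' rneg' qneg' one' zero') {x y z : A}
    (hx : x ∈ S) (hy : y ∈ S) (hz : z ∈ S) :
    inf' x (sup' y z) = sup' (inf' x y) (inf' x z) := by
  obtain ⟨X, le, E, a, b, f, hf⟩ := h
  have hyz := hf.closed_sup y hy z hz
  have hxy := hf.closed_inf x hx y hy
  have hxz := hf.closed_inf x hx z hz
  apply hf.inj (hf.closed_inf x hx _ hyz) (hf.closed_sup _ hxy _ hxz)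
  rw [hf.map_inf x hx _ hyz, hf.map_sup y hy z hz, hf.map_sup _ hxy _ hxz, hf.map_inf x hx y hy,
    hf.map_inf x hx z hz, Set.inter_union_distrib_left]

/-- Let `n ≥ 3` be odd and let `L` be a (finitely)
representable distributive quasi relation algebra.  Then the nested sum
`Sₙ[L]` of the finite odd Sugihara chain `Sₙ` and `L` is a (finitely)
representable distributive quasi relation algebra. -/
theorem Sn_nestedSum_representable (n : ℕ) (hn : 3 ≤ n) (hodd : Odd n)
    {L : Type u} [QRA L]
    (hdistL : ∀ x y z : L, QRA.inf x (QRA.sup y z) = QRA.sup (QRA.inf x y) (QRA.inf x z))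
    (hrep : RepresentableOn L Set.univ QRA.inf QRA.sup QRA.mul QRA.sneg QRA.rneg QRA.qneg
      QRA.one QRA.zero) :
    (∀ x ∈ sklCar (L := L) n, ∀ y ∈ sklCar (L := L) n, ∀ z ∈ sklCar (L := L) n,
      sklInf x (sklSup y z) = sklSup (sklInf x y) (sklInf x z)) ∧
    RepresentableOn (ℤ ⊕ L) (sklCar n) sklInf sklSup sklMul sklSneg sklRneg sklQneg
      sklOne sklZero ∧
    (FinRepresentableOn L Set.univ QRA.inf QRA.sup QRA.mul QRA.sneg QRA.rneg QRA.qneg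
        QRA.one QRA.zero →
      FinRepresentableOn (ℤ ⊕ L) (sklCar n) sklInf sklSup sklMul sklSneg sklRneg sklQneg
        sklOne sklZero) := by
  obtain ⟨k, rfl⟩ := hodd
  have h := hrep.nestedSum k
  exact ⟨fun x hx y hy z hz => h.inf_sup_distrib hx hy hz, h, fun hfin => hfin.nestedSum k⟩
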